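/- Define φ : ℝ → ℝ by φ(t) := t²/2 + t⁸/8 and F : ℝ → ℝ by F(t) := t⁴/4. Then for all x, y ∈ ℝ, (F′(x) − F′(y))² ≤ 8·D_φ(x, y); explicitly, (x³ − y³)² ≤ 8·(φ(x) − φ(y) − φ′(y)(x − y)). Equivalently, since D_φ(x, y) = (1/8)(x − y)²(x⁶ + 2x⁵y + 3x⁴y² + 4x³y³ + 5x²y⁴ + 6xy⁵ + 7y⁶ + 4), the inequality amounts to (x² + xy + y²)² ≤ x⁶ + 2x⁵y + 3x⁴y² + 4x³y³ + 5x²y⁴ + 6xy⁵ + 7y⁶ + 4 for all x, y ∈ ℝ. -/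

import Mathlib

/-!
Put `q = x² + xy + y²` and let `S = ∑ (i + 1) x⁶⁻ⁱ yⁱ` be the sextic form in the factorization
`8 D_φ(x, y) = (x - y)² (S + 4)`. Since `x³ - y³ = (x - y) q`, the bound reduces to `q² ≤ S + 4`.
A sum-of-squares certificate gives `q³ ≤ 3 S`, while AM-GM applied to `q³/2, q³/2, 4` gives
`3 q² ≤ q³ + 4`.
-/

section OrderedRing

variable {R : Type*} [CommRing R] [LinearOrder R] [IsStrictOrderedRing R]

lemma sq_add_mul_add_sq_nonneg (x y : R) : 0 ≤ x ^ 2 + x * y + y ^ 2 := by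
  linarith [sq_nonneg (x + y), sq_nonneg x, sq_nonneg y]

lemma three_mul_sq_le_cube_add_four {q : R} (hq : -1 ≤ q) : 3 * q ^ 2 ≤ q ^ 3 + 4 := by
  have hfactor : q ^ 3 + 4 - 3 * q ^ 2 = (q - 2) ^ 2 * (q + 1) := by ring
  rw [← sub_nonneg, hfactor]
  exact mul_nonneg (sq_nonneg _) (neg_le_iff_add_nonneg.mp hq)

lemma sq_add_mul_add_sq_cube_le_three_mul_sextic (x y : R) :
    (x ^ 2 + x * y + y ^ 2) ^ 3 ≤
      3 * (x ^ 6 + 2 * x ^ 5 * y + 3 * x ^ 4 * y ^ 2 + 4 * x ^ 3 * y ^ 3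
        + 5 * x ^ 2 * y ^ 4 + 6 * x * y ^ 5 + 7 * y ^ 6) := by
  have hsos : 8 * (3 * (x ^ 6 + 2 * x ^ 5 * y + 3 * x ^ 4 * y ^ 2 + 4 * x ^ 3 * y ^ 3
        + 5 * x ^ 2 * y ^ 4 + 6 * x * y ^ 5 + 7 * y ^ 6) - (x ^ 2 + x * y + y ^ 2) ^ 3) =
      (4 * x ^ 3 + 3 * x ^ 2 * y + 5 * y ^ 3) ^ 2 + 10 * (2 * x * y ^ 2 + 3 * y ^ 3) ^ 2
        + 15 * (x ^ 2 * y) ^ 2 + 2 * (x * y ^ 2) ^ 2 + 45 * (y ^ 3) ^ 2 := by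
    ring
  rw [← sub_nonneg]
  refine nonneg_of_mul_nonneg_right (a := 8) ?_ (by norm_num)
  rw [hsos]
  positivity

lemma sq_add_mul_add_sq_sq_le_sextic_add_four (x y : R) :
    (x ^ 2 + x * y + y ^ 2) ^ 2 ≤
      x ^ 6 + 2 * x ^ 5 * y + 3 * x ^ 4 * y ^ 2 + 4 * x ^ 3 * y ^ 3
        + 5 * x ^ 2 * y ^ 4 + 6 * x * y ^ 5 + 7 * y ^ 6 + 4 := by
  have hq : -1 ≤ x ^ 2 + x * y + y ^ 2 := by linarith [sq_add_mul_add_sq_nonneg x y]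
  linarith [three_mul_sq_le_cube_add_four hq, sq_add_mul_add_sq_cube_le_three_mul_sextic x y]

end OrderedRing

section Field

variable {K : Type*} [Field K]

lemma sq_div_two_add_pow_eight_div_eight_sub_tangent_eq [CharZero K] (x y : K) :
    (x ^ 2 / 2 + x ^ 8 / 8) - (y ^ 2 / 2 + y ^ 8 / 8) - (y + y ^ 7) * (x - y) =
      (1 / 8) * (x - y) ^ 2 * (x ^ 6 + 2 * x ^ 5 * y + 3 * x ^ 4 * y ^ 2
        + 4 * x ^ 3 * y ^ 3 + 5 * x ^ 2 * y ^ 4 + 6 * x * y ^ 5 + 7 * y ^ 6 + 4) := by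
  ring

lemma cube_sub_cube_sq_le_eight_mul_sub_tangent [LinearOrder K] [IsStrictOrderedRing K] (x y : K) :
    (x ^ 3 - y ^ 3) ^ 2 ≤
      8 * ((x ^ 2 / 2 + x ^ 8 / 8) - (y ^ 2 / 2 + y ^ 8 / 8) - (y + y ^ 7) * (x - y)) := by
  calc (x ^ 3 - y ^ 3) ^ 2
      = (x - y) ^ 2 * (x ^ 2 + x * y + y ^ 2) ^ 2 := by ring
    _ ≤ (x - y) ^ 2 * (x ^ 6 + 2 * x ^ 5 * y + 3 * x ^ 4 * y ^ 2 + 4 * x ^ 3 * y ^ 3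
          + 5 * x ^ 2 * y ^ 4 + 6 * x * y ^ 5 + 7 * y ^ 6 + 4) := by
        gcongr
        exact sq_add_mul_add_sq_sq_le_sextic_add_four x y
    _ = 8 * ((x ^ 2 / 2 + x ^ 8 / 8) - (y ^ 2 / 2 + y ^ 8 / 8) - (y + y ^ 7) * (x - y)) := by
        rw [sq_div_two_add_pow_eight_div_eight_sub_tangent_eq]
        ring

end Field

section Bregman

variable {𝕜 : Type*} [NontriviallyNormedField 𝕜]

/-- The Bregman distance `D_φ(x, y)` of a kernel `φ`: the error at `x` of the tangent
approximation to `φ` at `y`. It is meaningful only where `φ` is differentiable at `y`, since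
`deriv φ y` is `0` otherwise. -/
noncomputable def bregmanDist (φ : 𝕜 → 𝕜) (x y : 𝕜) : 𝕜 :=
  φ x - φ y - deriv φ y * (x - y)

lemma hasDerivAt_pow_div_natCast {n : ℕ} (hn : (n : 𝕜) ≠ 0) (x : 𝕜) :
    HasDerivAt (fun t : 𝕜 => t ^ n / n) (x ^ (n - 1)) x := by
  simpa only [mul_div_cancel_left₀ _ hn] using (hasDerivAt_pow n x).div_const (n : 𝕜)

lemma deriv_pow_four_div_four [CharZero 𝕜] (x : 𝕜) :
    deriv (fun t : 𝕜 => t ^ 4 / 4) x = x ^ 3 :=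
  (hasDerivAt_pow_div_natCast (n := 4) (by norm_num) x).deriv

lemma bregmanDist_sq_div_two_add_pow_eight_div_eight [CharZero 𝕜] (x y : 𝕜) :
    bregmanDist (fun t : 𝕜 => t ^ 2 / 2 + t ^ 8 / 8) x y =
      (x ^ 2 / 2 + x ^ 8 / 8) - (y ^ 2 / 2 + y ^ 8 / 8) - (y + y ^ 7) * (x - y) := by
  have hderiv : HasDerivAt (fun t : 𝕜 => t ^ 2 / 2 + t ^ 8 / 8) (y + y ^ 7) y := by
    simpa using (hasDerivAt_pow_div_natCast (n := 2) (by norm_num) y).fun_add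
      (hasDerivAt_pow_div_natCast (n := 8) (by norm_num) y)
  rw [bregmanDist, hderiv.deriv]

end Bregman

lemma deriv_quartic_sub_sq_le_eight_mul_bregmanDist (x y : ℝ) :
    (deriv (fun t : ℝ => t ^ 4 / 4) x - deriv (fun t : ℝ => t ^ 4 / 4) y) ^ 2 ≤
      8 * bregmanDist (fun t : ℝ => t ^ 2 / 2 + t ^ 8 / 8) x y := by
  rw [deriv_pow_four_div_four, deriv_pow_four_div_four,
    bregmanDist_sq_div_two_add_pow_eight_div_eight]
  exact cube_sub_cube_sq_le_eight_mul_sub_tangent x y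

/-- for `φ(t) = t²/2 + t⁸/8` and `F(t) = t⁴/4`, the gradient-difference
bound `(F′(x) − F′(y))² ≤ 8·D_φ(x, y)` holds globally; explicitly
`(x³ − y³)² ≤ 8(φ(x) − φ(y) − φ′(y)(x − y))`, which amounts to the polynomial inequality
`(x² + xy + y²)² ≤ x⁶ + 2x⁵y + 3x⁴y² + 4x³y³ + 5x²y⁴ + 6xy⁵ + 7y⁶ + 4`. -/
theorem quartic_gradient_bound_by_bregman :
    (∀ x y : ℝ,
      (deriv (fun t : ℝ => t ^ 4 / 4) x - deriv (fun t : ℝ => t ^ 4 / 4) y) ^ 2 ≤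
        8 * ((x ^ 2 / 2 + x ^ 8 / 8) - (y ^ 2 / 2 + y ^ 8 / 8)
          - deriv (fun t : ℝ => t ^ 2 / 2 + t ^ 8 / 8) y * (x - y))) ∧
    (∀ x y : ℝ,
      (x ^ 3 - y ^ 3) ^ 2 ≤
        8 * ((x ^ 2 / 2 + x ^ 8 / 8) - (y ^ 2 / 2 + y ^ 8 / 8) - (y + y ^ 7) * (x - y))) ∧
    (∀ x y : ℝ,
      (x ^ 2 / 2 + x ^ 8 / 8) - (y ^ 2 / 2 + y ^ 8 / 8) - (y + y ^ 7) * (x - y) =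
        (1 / 8) * (x - y) ^ 2 * (x ^ 6 + 2 * x ^ 5 * y + 3 * x ^ 4 * y ^ 2
          + 4 * x ^ 3 * y ^ 3 + 5 * x ^ 2 * y ^ 4 + 6 * x * y ^ 5 + 7 * y ^ 6 + 4)) ∧
    (∀ x y : ℝ,
      (x ^ 2 + x * y + y ^ 2) ^ 2 ≤
        x ^ 6 + 2 * x ^ 5 * y + 3 * x ^ 4 * y ^ 2 + 4 * x ^ 3 * y ^ 3
          + 5 * x ^ 2 * y ^ 4 + 6 * x * y ^ 5 + 7 * y ^ 6 + 4) := by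
  exact ⟨deriv_quartic_sub_sq_le_eight_mul_bregmanDist,
    cube_sub_cube_sq_le_eight_mul_sub_tangent,
    sq_div_two_add_pow_eight_div_eight_sub_tangent_eq,
    sq_add_mul_add_sq_sq_le_sextic_add_four⟩
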